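/- arXiv:math/0602374 — 3 statements merged into one kernel-verified Lean document; each statement's English description precedes it below -/
import Mathlib

section
/- Let A be a commutative ring and I ⊂ A a nilpotent ideal. For every f ∈ Γ₀(A,I) there exist unique g ∈ Γ₊(A,I) and h ∈ Γ₋(A,I) such that f = g·h. -/
/-!
Existence is a Newton-type iteration on the order of vanishing of the negative part. Suppose the
negative coefficients of `f` lie in `J = I ^ k`, `k ≥ 1`. Write `f = f₊ + f₋`; the power series `f₊`
is invertible, so `f = f₊ (1 + p + q)` where `f₊⁻¹ f₋ = p + q` is again split into its nonnegative
and negative parts. Then `f (1 - q) = f₊ (1 + p) - f₊ (p + q) q` has negative coefficients in `J * J`,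
while its constant coefficient has only changed by an element of `I`, hence is still a unit. As
`1 - q ∈ Γ₋(A,I)`, and `Γ₋(A,I)` is a group (inverses are finite geometric sums because a Laurent
series with all coefficients in `I` is nilpotent), a factorization of `f (1 - q)` gives one of `f`.
The iteration stops since `I` is nilpotent: see `exists_factorization`.

Uniqueness is the triviality of `Γ₊ ∩ Γ₋`: if `g h = g' h'` then `g'⁻¹ g = h' h⁻¹` has no negative
coefficients, no positive ones, and constant coefficient `1`.
-/


noncomputable section
variable (A : Type) [CommRing A]

/-- `f ∈ Γ(A,I)`: there is `w : ℤ` (the winding number) such that the coefficient of `t^w`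
is a unit and all lower coefficients lie in `I`. -/
def MemGamma (I : Ideal A) (f : LaurentSeries A) : Prop :=
  ∃ w : ℤ, IsUnit (f.coeff w) ∧ ∀ i < w, f.coeff i ∈ I

/-- `f ∈ Γ₀(A,I)`: the constant coefficient is a unit and all negative coefficients lie
in `I` (i.e. `f ∈ Γ(A,I)` with winding number `0`). -/
def MemGammaZero (I : Ideal A) (f : LaurentSeries A) : Prop :=
  IsUnit (f.coeff 0) ∧ ∀ i < (0 : ℤ), f.coeff i ∈ I

/-- `g ∈ Γ₊(A,I) = A[[t]]^×`: `g` is (the Laurent series of) an invertible power series. -/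
def MemGammaPlus (g : LaurentSeries A) : Prop :=
  ∃ u : (PowerSeries A)ˣ, g = HahnSeries.ofPowerSeries ℤ A (u : PowerSeries A)

/-- `h ∈ Γ₋(A,I)`: `h = 1 + (polynomial in t⁻¹ with zero constant term and
coefficients in I)`. -/
def MemGammaMinus (I : Ideal A) (h : LaurentSeries A) : Prop :=
  h.coeff 0 = 1 ∧ (∀ i : ℤ, 0 < i → h.coeff i = 0) ∧ ∀ i : ℤ, i < 0 → h.coeff i ∈ I

section Factorization

variable {A}

/-! ### Conditions on coefficients -/

/-- The ideal of Laurent series all of whose coefficients lie in `J`. -/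
def coeffIdeal (J : Ideal A) : Ideal (LaurentSeries A) where
  carrier := {f | ∀ i, f.coeff i ∈ J}
  zero_mem' := fun i => by simp
  add_mem' := fun {a b} ha hb i => by
    rw [HahnSeries.coeff_add]; exact J.add_mem (ha i) (hb i)
  smul_mem' := fun c x hx i => by
    rw [smul_eq_mul, HahnSeries.coeff_mul]
    exact J.sum_mem fun ij _ => J.mul_mem_left _ (hx _)

lemma mem_coeffIdeal {J : Ideal A} {f : LaurentSeries A} :
    f ∈ coeffIdeal J ↔ ∀ i, f.coeff i ∈ J := Iff.rfl

lemma coeffIdeal_mono {J K : Ideal A} (h : J ≤ K) : coeffIdeal J ≤ coeffIdeal K :=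
  fun _ hf i => h (hf i)

lemma mul_mem_coeffIdeal {J K : Ideal A} {f g : LaurentSeries A} (hf : f ∈ coeffIdeal J)
    (hg : g ∈ coeffIdeal K) : f * g ∈ coeffIdeal (J * K) := fun i => by
  rw [HahnSeries.coeff_mul]
  exact Ideal.sum_mem _ fun ij _ => Ideal.mul_mem_mul (hf _) (hg _)

lemma pow_mem_coeffIdeal {J : Ideal A} {f : LaurentSeries A} (hf : f ∈ coeffIdeal J) (n : ℕ) :
    f ^ n ∈ coeffIdeal (J ^ n) := by
  induction n with
  | zero => intro i; simp
  | succ n ih => rw [pow_succ, pow_succ]; exact mul_mem_coeffIdeal ih hf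

lemma isNilpotent_of_mem_coeffIdeal {I : Ideal A} (hI : IsNilpotent I) {f : LaurentSeries A}
    (hf : f ∈ coeffIdeal I) : IsNilpotent f := by
  obtain ⟨n, hn⟩ := hI
  refine ⟨n, ?_⟩
  ext i
  simpa [hn] using pow_mem_coeffIdeal hf n i

/-- The subring of Laurent series without negative coefficients, i.e. the copy of `A[[t]]`. -/
def nonnegSubring : Subring (LaurentSeries A) where
  carrier := {f | ∀ i < 0, f.coeff i = 0}
  zero_mem' := fun i _ => by simp
  one_mem' := fun i hi => by rw [HahnSeries.coeff_one, if_neg hi.ne]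
  add_mem' := fun {a b} ha hb i hi => by rw [HahnSeries.coeff_add, ha i hi, hb i hi, add_zero]
  neg_mem' := fun {a} ha i hi => by rw [HahnSeries.coeff_neg, ha i hi, neg_zero]
  mul_mem' := fun {a b} ha hb i hi => by
    rw [HahnSeries.coeff_mul]
    refine Finset.sum_eq_zero fun ij hij => ?_
    have hs := (Finset.mem_antidiagonal.1 hij).2.2
    rcases lt_or_ge ij.1 0 with h | h
    · rw [ha _ h, zero_mul]
    · rw [hb _ (by omega), mul_zero]

lemma mem_nonnegSubring {f : LaurentSeries A} :
    f ∈ (nonnegSubring : Subring (LaurentSeries A)) ↔ ∀ i < 0, f.coeff i = 0 := Iff.rfl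

/-- The subring `A[t⁻¹]` of Laurent series without positive coefficients. -/
def nonposSubring : Subring (LaurentSeries A) where
  carrier := {f | ∀ i, 0 < i → f.coeff i = 0}
  zero_mem' := fun i _ => by simp
  one_mem' := fun i hi => by rw [HahnSeries.coeff_one, if_neg hi.ne']
  add_mem' := fun {a b} ha hb i hi => by rw [HahnSeries.coeff_add, ha i hi, hb i hi, add_zero]
  neg_mem' := fun {a} ha i hi => by rw [HahnSeries.coeff_neg, ha i hi, neg_zero]
  mul_mem' := fun {a b} ha hb i hi => by
    rw [HahnSeries.coeff_mul]
    refine Finset.sum_eq_zero fun ij hij => ?_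
    have hs := (Finset.mem_antidiagonal.1 hij).2.2
    rcases lt_or_ge 0 ij.1 with h | h
    · rw [ha _ h, zero_mul]
    · rw [hb _ (by omega), mul_zero]

/-- `q ∈ t⁻¹ J[t⁻¹]`. -/
def NegIn (J : Ideal A) (q : LaurentSeries A) : Prop :=
  (∀ i, 0 ≤ i → q.coeff i = 0) ∧ q ∈ coeffIdeal J

lemma NegIn.mem_nonposSubring {J : Ideal A} {q : LaurentSeries A} (hq : NegIn J q) :
    q ∈ (nonposSubring : Subring (LaurentSeries A)) := fun i hi => hq.1 i hi.le

lemma NegIn.add {J : Ideal A} {p q : LaurentSeries A} (hp : NegIn J p) (hq : NegIn J q) :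
    NegIn J (p + q) :=
  ⟨fun i hi => by rw [HahnSeries.coeff_add, hp.1 i hi, hq.1 i hi, add_zero],
    Ideal.add_mem _ hp.2 hq.2⟩

lemma NegIn.neg {J : Ideal A} {q : LaurentSeries A} (hq : NegIn J q) : NegIn J (-q) :=
  ⟨fun i hi => by rw [HahnSeries.coeff_neg, hq.1 i hi, neg_zero], (Ideal.neg_mem_iff _).2 hq.2⟩

lemma NegIn.mul {J : Ideal A} {q s : LaurentSeries A} (hq : NegIn J q)
    (hs : s ∈ (nonposSubring : Subring (LaurentSeries A))) : NegIn J (q * s) := by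
  refine ⟨fun i hi => ?_, Ideal.mul_mem_right _ _ hq.2⟩
  rw [HahnSeries.coeff_mul]
  refine Finset.sum_eq_zero fun ij hij => ?_
  have h := (Finset.mem_antidiagonal.1 hij).2.2
  rcases le_or_gt 0 ij.1 with h0 | h0
  · rw [hq.1 _ h0, zero_mul]
  · rw [hs _ (by omega), mul_zero]

lemma NegIn.mono {J K : Ideal A} (h : J ≤ K) {q : LaurentSeries A} (hq : NegIn J q) : NegIn K q :=
  ⟨hq.1, coeffIdeal_mono h hq.2⟩

/-! ### The groups `Γ₋` and `Γ₊` -/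

lemma memGammaMinus_iff {I : Ideal A} {h : LaurentSeries A} :
    MemGammaMinus A I h ↔ NegIn I (h - 1) := by
  constructor
  · rintro ⟨h0, hp, hn⟩
    have hz : ∀ i, 0 ≤ i → (h - 1).coeff i = 0 := by
      intro i hi
      rw [HahnSeries.coeff_sub, HahnSeries.coeff_one]
      rcases hi.eq_or_lt with rfl | hi
      · simp [h0]
      · rw [hp i hi, if_neg hi.ne', sub_zero]
    refine ⟨hz, fun i => ?_⟩
    rcases le_or_gt 0 i with hi | hi
    · rw [hz i hi]; exact I.zero_mem
    · rw [HahnSeries.coeff_sub, HahnSeries.coeff_one, if_neg hi.ne, sub_zero]; exact hn i hi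
  · rintro ⟨hz, hm⟩
    refine ⟨?_, fun i hi => ?_, fun i hi => ?_⟩
    · have := hz 0 le_rfl
      rwa [HahnSeries.coeff_sub, HahnSeries.coeff_one, if_pos rfl, sub_eq_zero] at this
    · have := hz i hi.le
      rwa [HahnSeries.coeff_sub, HahnSeries.coeff_one, if_neg hi.ne', sub_zero] at this
    · have := hm i
      rwa [HahnSeries.coeff_sub, HahnSeries.coeff_one, if_neg hi.ne, sub_zero] at this

lemma MemGammaMinus.mul {I : Ideal A} {h k : LaurentSeries A} (hh : MemGammaMinus A I h)
    (hk : MemGammaMinus A I k) : MemGammaMinus A I (h * k) := by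
  rw [memGammaMinus_iff] at *
  have : h * k - 1 = (h - 1) + (k - 1) + (h - 1) * (k - 1) := by ring
  rw [this]
  exact (hh.add hk).add (hh.mul hk.mem_nonposSubring)

/-- `Γ₋(A,I)` is closed under inverses: with `h = 1 - q` and `q` nilpotent, the inverse is the
finite geometric sum `s = ∑ qⁱ`, and `s - 1 = q s` is again a polynomial in `t⁻¹` over `I`
without constant term. -/
lemma MemGammaMinus.exists_inv {I : Ideal A} (hI : IsNilpotent I) {h : LaurentSeries A}
    (hh : MemGammaMinus A I h) : ∃ s, MemGammaMinus A I s ∧ h * s = 1 := by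
  rw [memGammaMinus_iff] at hh
  have hq : NegIn I (1 - h) := by simpa using hh.neg
  obtain ⟨n, hn⟩ := isNilpotent_of_mem_coeffIdeal hI hq.2
  have hs : h * ∑ i ∈ Finset.range n, (1 - h) ^ i = 1 := by
    have := mul_neg_geom_sum (1 - h) n
    rwa [hn, sub_zero, sub_sub_cancel] at this
  refine ⟨∑ i ∈ Finset.range n, (1 - h) ^ i, memGammaMinus_iff.2 ?_, hs⟩
  have hmem : ∑ i ∈ Finset.range n, (1 - h) ^ i ∈ (nonposSubring : Subring (LaurentSeries A)) :=
    sum_mem fun i _ => pow_mem hq.mem_nonposSubring i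
  have key : ∑ i ∈ Finset.range n, (1 - h) ^ i - 1 =
      (1 - h) * ∑ i ∈ Finset.range n, (1 - h) ^ i := by
    rw [sub_mul, hs, one_mul]
  rw [key]
  exact hq.mul hmem

lemma ofPowerSeries_mem_nonnegSubring (u : PowerSeries A) :
    HahnSeries.ofPowerSeries ℤ A u ∈ (nonnegSubring : Subring (LaurentSeries A)) := fun i hi => by
  rw [PowerSeries.coeff_coe, if_pos hi]

lemma memGammaPlus_of_coeff {f : LaurentSeries A} (h0 : IsUnit (f.coeff 0))
    (hf : f ∈ (nonnegSubring : Subring (LaurentSeries A))) : MemGammaPlus A f := by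
  have hu : IsUnit (PowerSeries.mk fun n => f.coeff n) := by
    rw [PowerSeries.isUnit_iff_constantCoeff]
    simpa using h0
  refine ⟨hu.unit, ?_⟩
  ext i
  rw [PowerSeries.coeff_coe]
  split_ifs with hi
  · exact hf i hi
  · rw [IsUnit.unit_spec, PowerSeries.coeff_mk, Int.natAbs_of_nonneg (not_lt.1 hi)]

lemma MemGammaPlus.mem_nonnegSubring {g : LaurentSeries A} (hg : MemGammaPlus A g) :
    g ∈ (nonnegSubring : Subring (LaurentSeries A)) := by
  obtain ⟨u, rfl⟩ := hg
  exact ofPowerSeries_mem_nonnegSubring _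

lemma MemGammaPlus.exists_inv {g : LaurentSeries A} (hg : MemGammaPlus A g) :
    ∃ v ∈ (nonnegSubring : Subring (LaurentSeries A)), g * v = 1 := by
  obtain ⟨u, rfl⟩ := hg
  refine ⟨_, ofPowerSeries_mem_nonnegSubring (↑u⁻¹ : PowerSeries A), ?_⟩
  rw [← map_mul, Units.mul_inv, map_one]

/-! ### Existence -/

lemma truncLT_negIn {J : Ideal A} {f : LaurentSeries A} (hf : ∀ i < 0, f.coeff i ∈ J) :
    NegIn J (HahnSeries.truncLT 0 f) := by
  refine ⟨fun i hi => HahnSeries.coeff_truncLT_of_le hi f, fun i => ?_⟩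
  rw [HahnSeries.coeff_truncLT]
  split_ifs with hi
  · exact hf i hi
  · exact J.zero_mem

lemma sub_truncLT_mem_nonnegSubring (f : LaurentSeries A) :
    f - HahnSeries.truncLT 0 f ∈ (nonnegSubring : Subring (LaurentSeries A)) := fun i hi => by
  rw [HahnSeries.coeff_sub, HahnSeries.coeff_truncLT_of_lt hi, sub_self]

/-- One step of the iteration: multiplying by a suitable `1 - q ∈ Γ₋(A,J)` moves the negative
coefficients of `f` from `J` into `J * J`. -/
lemma exists_improve {J : Ideal A} {f : LaurentSeries A} (h0 : IsUnit (f.coeff 0))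
    (hf : ∀ i < 0, f.coeff i ∈ J) :
    ∃ q, NegIn J q ∧ ∀ i < 0, (f * (1 - q)).coeff i ∈ J * J := by
  set m := HahnSeries.truncLT 0 f with hm
  have hmJ : NegIn J m := truncLT_negIn hf
  have hplus : f - m ∈ (nonnegSubring : Subring (LaurentSeries A)) :=
    sub_truncLT_mem_nonnegSubring f
  have hunit : MemGammaPlus A (f - m) := by
    refine memGammaPlus_of_coeff ?_ hplus
    rwa [HahnSeries.coeff_sub, hmJ.1 0 le_rfl, sub_zero]
  obtain ⟨v, -, hv⟩ := hunit.exists_inv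
  have hvm : v * m ∈ coeffIdeal J := Ideal.mul_mem_left _ _ hmJ.2
  set q := HahnSeries.truncLT 0 (v * m) with hq
  have hqJ : NegIn J q := truncLT_negIn fun i _ => hvm i
  have hp : v * m - q ∈ (nonnegSubring : Subring (LaurentSeries A)) :=
    sub_truncLT_mem_nonnegSubring _
  refine ⟨q, hqJ, fun i hi => ?_⟩
  have key : f * (1 - q) = (f - m) * (1 + (v * m - q)) - (f - m) * (v * m * q) := by
    linear_combination (-m + q * m) * hv
  rw [key, HahnSeries.coeff_sub, mul_mem hplus (add_mem (one_mem _) hp) i hi, zero_sub,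
    neg_mem_iff]
  exact Ideal.mul_mem_left _ _ (mul_mem_coeffIdeal hvm hqJ.2) i

/-- Existence of the factorization when the negative coefficients lie in `I ^ (k + 1)`, by
induction on a bound `d` for the number of remaining steps until `I ^ (k + 1)` vanishes. -/
lemma exists_factorization {I : Ideal A} (hI : IsNilpotent I) (d : ℕ) :
    ∀ (k : ℕ) (f : LaurentSeries A), I ^ (k + 1 + d) = ⊥ → IsUnit (f.coeff 0) →
      (∀ i < 0, f.coeff i ∈ I ^ (k + 1)) →
      ∃ g h, MemGammaPlus A g ∧ MemGammaMinus A I h ∧ f = g * h := by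
  induction d with
  | zero =>
    intro k f hk h0 hf
    refine ⟨f, 1, memGammaPlus_of_coeff h0 fun i hi => ?_, ?_, (mul_one f).symm⟩
    · simpa [hk] using hf i hi
    · rw [memGammaMinus_iff, sub_self]
      exact ⟨fun i _ => by simp, zero_mem _⟩
  | succ d ih =>
    intro k f hk h0 hf
    obtain ⟨q, hq, himp⟩ := exists_improve h0 hf
    have hqI : NegIn I q := hq.mono (Ideal.pow_le_self (Nat.succ_ne_zero k))
    have hle : I ^ (k + 1) * I ^ (k + 1) ≤ I ^ (k + 1 + 1) := by
      rw [← pow_add]; exact Ideal.pow_le_pow_right (by omega)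
    have hunit : IsUnit ((f * (1 - q)).coeff 0) := by
      have hmem : (f * q).coeff 0 ∈ I := Ideal.mul_mem_left _ f hqI.2 0
      have hnil : IsNilpotent ((f * q).coeff 0) := by
        obtain ⟨n, hn⟩ := hI
        exact ⟨n, by simpa [hn] using Ideal.pow_mem_pow hmem n⟩
      rw [mul_sub, mul_one, HahnSeries.coeff_sub, sub_eq_add_neg]
      exact hnil.neg.isUnit_add_left_of_commute h0 (Commute.all _ _)
    obtain ⟨g, h, hg, hh, hgh⟩ := ih (k + 1) (f * (1 - q))
      (by rw [← hk]; congr 1; omega) hunit fun i hi => hle (himp i hi)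
    have h1q : MemGammaMinus A I (1 - q) := by
      rw [memGammaMinus_iff]; simpa using hqI.neg
    obtain ⟨s, hs, hqs⟩ := h1q.exists_inv hI
    exact ⟨g, h * s, hg, hh.mul hs, by rw [← mul_assoc, ← hgh, mul_assoc, hqs, mul_one]⟩

/-! ### Uniqueness -/

/-- `Γ₊ ∩ Γ₋` is trivial. -/
lemma eq_one_of_nonneg_of_memGammaMinus {I : Ideal A} {u : LaurentSeries A}
    (hu : u ∈ (nonnegSubring : Subring (LaurentSeries A))) (hu' : MemGammaMinus A I u) :
    u = 1 := by
  ext i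
  rw [HahnSeries.coeff_one]
  rcases lt_trichotomy i 0 with hi | rfl | hi
  · rw [hu i hi, if_neg hi.ne]
  · rw [hu'.1, if_pos rfl]
  · rw [hu'.2.1 i hi, if_neg hi.ne']

end Factorization

/-- For a nilpotent ideal `I ⊆ A` and `f ∈ Γ₀(A,I)`, there exist unique
`g ∈ Γ₊(A,I)` and `h ∈ Γ₋(A,I)` with `f = g·h`. -/
theorem gammaZero_unique_factorization (A : Type) [CommRing A] (I : Ideal A)
    (hI : IsNilpotent I) (f : LaurentSeries A) (hf : MemGammaZero A I f) :
    ∃! p : LaurentSeries A × LaurentSeries A,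
      MemGammaPlus A p.1 ∧ MemGammaMinus A I p.2 ∧ f = p.1 * p.2 := by
  obtain ⟨n, hn⟩ := id hI
  obtain ⟨g, h, hg, hh, hgh⟩ := exists_factorization hI n 0 f
    (by rw [pow_add, hn, mul_zero]; rfl) hf.1 (by simpa using hf.2)
  refine ⟨(g, h), ⟨hg, hh, hgh⟩, ?_⟩
  rintro ⟨g', h'⟩ ⟨hg', hh', hgh'⟩
  simp only at hg' hh' hgh'
  obtain ⟨v, hv, hgv⟩ := hg.exists_inv
  obtain ⟨s, hs, hhs⟩ := hh'.exists_inv hI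
  have e : g * h = g' * h' := hgh.symm.trans hgh'
  have hu : v * g' = h * s := by
    linear_combination (-v * g') * hhs - v * s * e + h * s * hgv
  have h1 : v * g' = 1 := eq_one_of_nonneg_of_memGammaMinus
    (mul_mem hv hg'.mem_nonnegSubring) (hu ▸ hh.mul hs)
  have hg_eq : g' = g := by linear_combination g * h1 - g' * hgv
  have hh_eq : h' = h := by
    subst hg_eq
    linear_combination (-v) * e + (h - h') * hgv
  rw [hg_eq, hh_eq]
end
end

section
/- (Lifting Lemma.) Let A be a commutative ring, I ⊂ A a nilpotent ideal, and f ∈ A((t)) such that both f ∈ Γ₀(A,I) and 1 − f ∈ Γ₀(A,I). Then there exist: a commutative ring A₁ with a nilpotent ideal I₁ ⊂ A₁; an artinian local ℚ-algebra A₂ with a nilpotent ideal I₂ ⊂ A₂; a ring homomorphism φ : A₁ → A with φ(I₁) ⊂ I; an element f₁ ∈ A₁((t)) with f₁ ∈ Γ₀(A₁,I₁), 1 − f₁ ∈ Γ₀(A₁,I₁), Γ(φ)(f₁) = f and Γ(φ)(1 − f₁) = 1 − f; and a ring homomorphism ψ : A₁ → A₂ with ψ(I₁) ⊂ I₂ such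 that the induced map Γ(ψ) : Γ(A₁,I₁) → Γ(A₂,I₂) is injective. -/
/-!
The pair `(A, f)` is a specialisation of a universal one. Suppose `f = ∑ aᵢ tⁱ` has `aᵢ = 0` for
`i < -N` and `I ^ n = 0`. Put `R = ℤ[x₀, x₁, …][1 / (x₀ (1 - x₀))]` and
`A₁ = R[y₁, …, y_N] / (y₁, …, y_N) ^ n`. The series
`f₁ = ∑_{j = 1}^{N} y_j t⁻ʲ + ∑_{i ≥ 0} xᵢ tⁱ` over `A₁` specialises to `f` under `xᵢ ↦ aᵢ`,
`y_j ↦ a_{-j}`: this is well defined because `a₀` and `1 - a₀` are units and the `a_{-j}` lie in `I`.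

Since `R` is a domain of characteristic zero, its fraction field `K` is a `ℚ`-algebra, and
`A₂ = K[y₁, …, y_N] / (y₁, …, y_N) ^ n` is noetherian with a single prime ideal, hence artinian
local. Membership in `(y₁, …, y_N) ^ n` is the vanishing of the coefficients of degree `< n`, so it
can be tested over `K`; hence `A₁ → A₂` is injective, and so is the induced map on Laurent series.
-/

noncomputable section
variable (A : Type) [CommRing A]

namespace LiftingLemma

open MvPolynomial

/-- The truncated polynomial ring `R[y_j : j ∈ σ] / (y) ^ n`. -/
abbrev Trunc (σ R : Type) [CommRing R] (n : ℕ) : Type :=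
  MvPolynomial σ R ⧸ (idealOfVars σ R ^ n)

/-- The ideal of `R[y] / (y) ^ n` generated by the variables. -/
abbrev truncIdeal (σ R : Type) [CommRing R] (n : ℕ) : Ideal (Trunc σ R n) :=
  (idealOfVars σ R).map (Ideal.Quotient.mk _)

lemma truncIdeal_isNilpotent (σ R : Type) [CommRing R] (n : ℕ) :
    IsNilpotent (truncIdeal σ R n) :=
  ⟨n, by rw [truncIdeal, ← Ideal.map_pow, Ideal.map_quotient_self, Ideal.zero_eq_bot]⟩

lemma idealOfVars_eq_ker (σ R : Type) [CommRing R] :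
    idealOfVars σ R = RingHom.ker (constantCoeff (σ := σ) (R := R)) := by
  ext p
  rw [← pow_one (idealOfVars σ R), mem_pow_idealOfVars_iff', RingHom.mem_ker, constantCoeff_eq]
  simp only [Nat.lt_one_iff, Finsupp.degree_eq_zero_iff, forall_eq]

lemma idealOfVars_isMaximal (σ K : Type) [Field K] : (idealOfVars σ K).IsMaximal := by
  rw [idealOfVars_eq_ker]
  exact RingHom.ker_isMaximal_of_surjective _ fun x => ⟨C x, constantCoeff_C σ x⟩

lemma trunc_nontrivial (σ K : Type) [Field K] (n : ℕ) : Nontrivial (Trunc σ K (n + 1)) :=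
  Ideal.Quotient.nontrivial_iff.2 fun h => (idealOfVars_isMaximal σ K).ne_top
    (top_le_iff.1 (h ▸ Ideal.pow_le_self n.succ_ne_zero))

/-- A prime of `K[y] / (y) ^ n` pulls back to a prime containing `(y) ^ n`, hence containing the
maximal ideal `(y)`. -/
lemma trunc_prime_eq (σ K : Type) [Field K] (n : ℕ) (P : Ideal (Trunc σ K n)) (hP : P.IsPrime) :
    P = truncIdeal σ K n := by
  have hle : idealOfVars σ K ^ n ≤ P.comap (Ideal.Quotient.mk _) := by
    intro x hx
    rw [Ideal.mem_comap, Ideal.Quotient.eq_zero_iff_mem.2 hx]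
    exact P.zero_mem
  have hc : (P.comap (Ideal.Quotient.mk (idealOfVars σ K ^ n))).IsPrime := inferInstance
  have heq := (idealOfVars_isMaximal σ K).eq_of_le hc.ne_top (hc.le_of_pow_le hle)
  exact (Ideal.map_comap_of_surjective _ Ideal.Quotient.mk_surjective P).symm.trans
    (congrArg (Ideal.map _) heq.symm)

lemma trunc_isMaximal (σ K : Type) [Field K] (n : ℕ) (P : Ideal (Trunc σ K (n + 1)))
    (hP : P.IsPrime) : P.IsMaximal := by
  have := trunc_nontrivial σ K n
  obtain ⟨M, hM⟩ := Ideal.exists_maximal (Trunc σ K (n + 1))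
  rw [trunc_prime_eq σ K _ P hP, ← trunc_prime_eq σ K _ M hM.isPrime]
  exact hM

lemma trunc_isLocalRing (σ K : Type) [Field K] (n : ℕ) : IsLocalRing (Trunc σ K (n + 1)) := by
  have := trunc_nontrivial σ K n
  obtain ⟨M, hM⟩ := Ideal.exists_maximal (Trunc σ K (n + 1))
  exact .of_unique_max_ideal ⟨M, hM, fun P hP => by
    rw [trunc_prime_eq σ K _ P hP.isPrime, ← trunc_prime_eq σ K _ M hM.isPrime]⟩

lemma trunc_isArtinianRing (σ K : Type) [Finite σ] [Field K] (n : ℕ) :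
    IsArtinianRing (Trunc σ K (n + 1)) := by
  have : Ring.KrullDimLE 0 (Trunc σ K (n + 1)) := .mk₀ (trunc_isMaximal σ K n)
  exact IsNoetherianRing.isArtinianRing_of_krullDimLE_zero

/-- Extension of scalars `R[y] / (y) ^ n → S[y] / (y) ^ n`. -/
def truncMap (σ : Type) {R S : Type} [CommRing R] [CommRing S] (g : R →+* S) (n : ℕ) :
    Trunc σ R n →+* Trunc σ S n :=
  Ideal.quotientMap _ (MvPolynomial.map g) fun p hp => by
    rw [Ideal.mem_comap]
    rw [mem_pow_idealOfVars_iff'] at hp ⊢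
    intro x hx
    rw [coeff_map, hp x hx, map_zero]

/-- A polynomial lies in `(y) ^ n` exactly when its coefficients of degree `< n` vanish, a condition
that an injective `g` detects. -/
lemma truncMap_injective (σ : Type) {R S : Type} [CommRing R] [CommRing S] (g : R →+* S)
    (hg : Function.Injective g) (n : ℕ) : Function.Injective (truncMap σ g n) :=
  Ideal.quotientMap_injective' fun p hp => by
    rw [Ideal.mem_comap] at hp
    rw [mem_pow_idealOfVars_iff'] at hp ⊢
    intro x hx
    exact hg (by rw [← coeff_map, hp x hx, map_zero])

lemma truncMap_mem (σ : Type) {R S : Type} [CommRing R] [CommRing S] (g : R →+* S) (n : ℕ)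
    (x : Trunc σ R n) (hx : x ∈ truncIdeal σ R n) : truncMap σ g n x ∈ truncIdeal σ S n := by
  suffices truncIdeal σ R n ≤ (truncIdeal σ S n).comap (truncMap σ g n) from this hx
  rw [truncIdeal, Ideal.map_le_iff_le_comap, Ideal.span_le]
  rintro _ ⟨j, rfl⟩
  simp only [SetLike.mem_coe, Ideal.mem_comap, truncMap, Ideal.quotientMap_mk, map_X]
  exact Ideal.mem_map_of_mem _ (Ideal.subset_span ⟨j, rfl⟩)

lemma map_eval₂Hom_idealOfVars_le {σ R B : Type} [CommRing R] [CommRing B] (I : Ideal B)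
    (g : R →+* B) (b : σ → B) (hb : ∀ j, b j ∈ I) :
    (idealOfVars σ R).map (eval₂Hom g b) ≤ I := by
  rw [Ideal.map_le_iff_le_comap, Ideal.span_le]
  rintro _ ⟨j, rfl⟩
  simpa using hb j

/-- The map `R[y] / (y) ^ n → B` given by `g : R → B` and `y_j ↦ b_j`, where the `b_j` lie in an
ideal `I` with `I ^ n = 0`. -/
def truncLift {σ R B : Type} [CommRing R] [CommRing B] {n : ℕ} {I : Ideal B} (hI : I ^ n = ⊥)
    (g : R →+* B) (b : σ → B) (hb : ∀ j, b j ∈ I) : Trunc σ R n →+* B :=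
  Ideal.Quotient.lift _ (eval₂Hom g b) fun p hp => by
    have h := Ideal.mem_map_of_mem (eval₂Hom g b) hp
    rw [Ideal.map_pow] at h
    have h' := Ideal.pow_right_mono (map_eval₂Hom_idealOfVars_le I g b hb) n h
    rwa [hI, Ideal.mem_bot] at h'

lemma truncLift_mem {σ R B : Type} [CommRing R] [CommRing B] {n : ℕ} {I : Ideal B}
    (hI : I ^ n = ⊥) (g : R →+* B) (b : σ → B) (hb : ∀ j, b j ∈ I) (x : Trunc σ R n)
    (hx : x ∈ truncIdeal σ R n) : truncLift hI g b hb x ∈ I := by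
  suffices truncIdeal σ R n ≤ I.comap (truncLift hI g b hb) from this hx
  rw [truncIdeal, Ideal.map_le_iff_le_comap, Ideal.span_le]
  rintro _ ⟨j, rfl⟩
  simpa [truncLift] using hb j

/-- The element `x₀ (1 - x₀)` of `ℤ[x₀, x₁, …]`. -/
def disc : MvPolynomial ℕ ℤ := X 0 * (1 - X 0)

lemma disc_ne_zero : disc ≠ 0 := by
  intro h
  -- `x₀ (1 - x₀)` takes the value `-2` at `x₀ = 2`.
  have := congrArg (eval fun _ => (2 : ℤ)) h
  simp [disc] at this

/-- The ring `ℤ[x₀, x₁, …][1 / (x₀ (1 - x₀))]`. -/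
abbrev Base : Type := Localization.Away disc

lemma powers_disc_le : Submonoid.powers disc ≤ nonZeroDivisors (MvPolynomial ℕ ℤ) :=
  powers_le_nonZeroDivisors_of_noZeroDivisors disc_ne_zero

instance : IsDomain Base := IsLocalization.isDomain_localization powers_disc_le

instance : CharZero Base :=
  charZero_of_injective_algebraMap (R := MvPolynomial ℕ ℤ)
    (IsLocalization.injective Base powers_disc_le)

instance : CharZero (FractionRing Base) :=
  charZero_of_injective_algebraMap (IsFractionRing.injective Base (FractionRing Base))

/-- The class of the variable `xᵢ` in `Base`. -/
def bx (i : ℕ) : Base := algebraMap (MvPolynomial ℕ ℤ) Base (X i)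

lemma isUnit_bx_mul : IsUnit (bx 0 * (1 - bx 0)) := by
  have := IsLocalization.Away.algebraMap_isUnit (S := Base) disc
  simpa [disc, bx] using this

/-- The map `Base → B` sending `xᵢ` to `bᵢ`, where `b₀` and `1 - b₀` are units. -/
def baseLift {B : Type} [CommRing B] (b : ℕ → B) (h0 : IsUnit (b 0)) (h1 : IsUnit (1 - b 0)) :
    Base →+* B :=
  IsLocalization.Away.lift (g := eval₂Hom (Int.castRingHom B) b) disc
    (by simpa [disc] using h0.mul h1)

lemma baseLift_bx {B : Type} [CommRing B] (b : ℕ → B) (h0 : IsUnit (b 0))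
    (h1 : IsUnit (1 - b 0)) (i : ℕ) : baseLift b h0 h1 (bx i) = b i := by
  rw [baseLift, bx, IsLocalization.Away.lift_eq]
  simp

/-- The coefficients of the universal series: `xᵢ` in degree `i ≥ 0`, and `y_j` in degree
`-(j + 1)` for `j ∈ Fin N`. -/
def univCoeff (N n : ℕ) (i : ℤ) : Trunc (Fin N) Base n :=
  if 0 ≤ i then Ideal.Quotient.mk _ (C (bx i.toNat))
  else if h : (-i - 1).toNat < N then Ideal.Quotient.mk _ (X ⟨(-i - 1).toNat, h⟩)
  else 0

lemma univCoeff_zero (N n : ℕ) : univCoeff N n 0 = Ideal.Quotient.mk _ (C (bx 0)) := by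
  simp [univCoeff]

lemma univCoeff_neg_mem (N n : ℕ) (i : ℤ) (hi : i < 0) :
    univCoeff N n i ∈ truncIdeal (Fin N) Base n := by
  rw [univCoeff, if_neg hi.not_ge]
  split_ifs
  · exact Ideal.mem_map_of_mem _ (Ideal.subset_span ⟨_, rfl⟩)
  · exact Ideal.zero_mem _

lemma univCoeff_bddBelow (N n : ℕ) : BddBelow (Function.support (univCoeff N n)) := by
  refine ⟨-(N : ℤ), fun i hi => ?_⟩
  by_contra hlt
  apply hi
  rw [univCoeff, if_neg (by lia), dif_neg (by lia)]

/-- The universal series `∑_{j < N} y_j t^{-(j + 1)} + ∑_{i ≥ 0} xᵢ tⁱ`. -/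
def univSeries (N n : ℕ) : LaurentSeries (Trunc (Fin N) Base n) :=
  HahnSeries.ofSuppBddBelow (univCoeff N n) (univCoeff_bddBelow N n)

lemma univSeries_mem (N n : ℕ) :
    MemGammaZero _ (truncIdeal (Fin N) Base n) (univSeries N n) := by
  refine ⟨?_, univCoeff_neg_mem N n⟩
  have h := (isUnit_of_mul_isUnit_left isUnit_bx_mul).map
    ((Ideal.Quotient.mk (idealOfVars (Fin N) Base ^ n)).comp C)
  simpa [univSeries, univCoeff_zero] using h

lemma one_sub_univSeries_mem (N n : ℕ) :
    MemGammaZero _ (truncIdeal (Fin N) Base n) (1 - univSeries N n) := by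
  refine ⟨?_, fun i hi => ?_⟩
  · have h := (isUnit_of_mul_isUnit_right isUnit_bx_mul).map
      ((Ideal.Quotient.mk (idealOfVars (Fin N) Base ^ n)).comp C)
    simpa [univSeries, univCoeff_zero] using h
  · rw [HahnSeries.coeff_sub, HahnSeries.coeff_one, if_neg hi.ne, zero_sub]
    exact neg_mem (univCoeff_neg_mem N n i hi)

end LiftingLemma

/-- **Lifting Lemma.** Let `I ⊆ A` be a nilpotent ideal and `f ∈ A((t))` with
`f, 1-f ∈ Γ₀(A,I)`. Then there exist: a ring `A₁` with a nilpotent ideal `I₁`;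
an artinian local `ℚ`-algebra `A₂` with a nilpotent ideal `I₂`; a ring homomorphism
`φ : A₁ → A` with `φ(I₁) ⊆ I`; an element `f₁ ∈ A₁((t))` with `f₁, 1-f₁ ∈ Γ₀(A₁,I₁)`,
`Γ(φ)(f₁) = f` and `Γ(φ)(1-f₁) = 1-f`; and a ring homomorphism `ψ : A₁ → A₂` with
`ψ(I₁) ⊆ I₂` such that `Γ(ψ)` is injective on `Γ(A₁,I₁)`. -/
theorem lifting_lemma (A : Type) [CommRing A] (I : Ideal A) (hI : IsNilpotent I)
    (f : LaurentSeries A) (hf : MemGammaZero A I f) (hf' : MemGammaZero A I (1 - f)) :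
    ∃ (A₁ : Type) (_ : CommRing A₁) (I₁ : Ideal A₁), IsNilpotent I₁ ∧
    ∃ (A₂ : Type) (_ : CommRing A₂) (_ : Algebra ℚ A₂),
      IsArtinianRing A₂ ∧ IsLocalRing A₂ ∧
    ∃ (I₂ : Ideal A₂), IsNilpotent I₂ ∧
    ∃ (φ : A₁ →+* A), (∀ x ∈ I₁, φ x ∈ I) ∧
    ∃ (f₁ : LaurentSeries A₁),
      MemGammaZero A₁ I₁ f₁ ∧ MemGammaZero A₁ I₁ (1 - f₁) ∧
      HahnSeries.map f₁ φ = f ∧ HahnSeries.map (1 - f₁) φ = 1 - f ∧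
    ∃ (ψ : A₁ →+* A₂), (∀ x ∈ I₁, ψ x ∈ I₂) ∧
      ∀ g₁ g₂ : LaurentSeries A₁, MemGamma A₁ I₁ g₁ → MemGamma A₁ I₁ g₂ →
        HahnSeries.map g₁ ψ = HahnSeries.map g₂ ψ → g₁ = g₂ := by
  open LiftingLemma in
  obtain ⟨n, hn⟩ := hI
  -- The exponent `n + 1` is positive, which makes `A₂` nontrivial.
  have hn' : I ^ (n + 1) = ⊥ := by rw [pow_succ, hn, Ideal.zero_eq_bot, Ideal.bot_mul]
  let N : ℕ := (-f.order).toNat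
  have h1 : IsUnit (1 - f.coeff ((0 : ℕ) : ℤ)) := by simpa using hf'.1
  let g : Base →+* A := baseLift (fun i => f.coeff (i : ℤ)) hf.1 h1
  have hb : ∀ j : Fin N, f.coeff (-((j : ℕ) : ℤ) - 1) ∈ I := fun j => hf.2 _ (by lia)
  let φ : Trunc (Fin N) Base (n + 1) →+* A := truncLift hn' g _ hb
  have hφ : HahnSeries.map (univSeries N (n + 1)) φ = f := by
    ext i
    change φ (univCoeff N (n + 1) i) = f.coeff i
    rw [univCoeff]
    split_ifs with hi hj
    · obtain ⟨k, rfl⟩ := Int.eq_ofNat_of_zero_le hi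
      simp [φ, truncLift, g, baseLift_bx]
    · simp only [φ, truncLift, Ideal.Quotient.lift_mk, MvPolynomial.coe_eval₂Hom,
        MvPolynomial.eval₂_X]
      congr 1
      lia
    · rw [map_zero, HahnSeries.coeff_eq_zero_of_lt_order]
      lia
  let ι := algebraMap Base (FractionRing Base)
  refine ⟨Trunc (Fin N) Base (n + 1), inferInstance, truncIdeal _ _ _,
    truncIdeal_isNilpotent _ _ _, Trunc (Fin N) (FractionRing Base) (n + 1), inferInstance,
    inferInstance, trunc_isArtinianRing _ _ _, trunc_isLocalRing _ _ _, truncIdeal _ _ _,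
    truncIdeal_isNilpotent _ _ _, φ, truncLift_mem hn' g _ hb, univSeries N (n + 1),
    univSeries_mem _ _, one_sub_univSeries_mem _ _, hφ, ?_, truncMap _ ι (n + 1),
    truncMap_mem _ ι _, fun g₁ g₂ _ _ h => ?_⟩
  · rw [← hφ]
    ext i
    simp only [HahnSeries.map_coeff, HahnSeries.coeff_sub, HahnSeries.coeff_one, map_sub]
    split_ifs <;> simp
  · ext i
    exact truncMap_injective _ ι (IsFractionRing.injective Base (FractionRing Base)) _
      (congrArg (fun s => HahnSeries.coeff s i) h)
end
end

section
/- Let A be an artinian local ring and f = Σ_{i ≥ −N} a_i t^i ∈ A((t))^× with 1 − f ∈ A((t))^×. If w(f) = w(1−f) = 0 and a_i ∈ A^× for some positive integer i > 0, then there exist an invertible element λ ∈ A^× and a series φ ∈ A((t))^× with w(φ) > 0 such that 1 − f = (1 − λ)(1 − φ). -/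
/-!
Put `lam = a₀`, the constant coefficient of `f`. It is a unit because `w(f) = 0`, and `1 - a₀`, the
constant coefficient of `1 - f`, is a unit because `w(1 - f) = 0`. The equation
`1 - f = (1 - a₀)(1 - φ)` then forces `φ = (1 - a₀)⁻¹ (f - a₀)`. The negative coefficients of `φ` are
unit multiples of those of `f`, hence lie in the maximal ideal; its constant coefficient vanishes;
and some positive coefficient is a unit. So the winding number of `φ` is the least `w > 0` for which
`a_w` is a unit.

Such a `φ` is invertible by `WindingNumberIs.isUnit`: the maximal ideal of an artinian local ring is
nil, so the finitely many nonzero terms of `φ` of degree below `w` add up to a nilpotent series,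
while the remaining part has a unit as leading coefficient.
-/

/-- The winding number of `f` is `w` (for a local ring `A`): the coefficient of `t^w` is a
unit and all lower coefficients lie in the maximal ideal. -/
def WindingNumberIs (A : Type) [CommRing A] [IsLocalRing A]
    (f : LaurentSeries A) (w : ℤ) : Prop :=
  IsUnit (f.coeff w) ∧ ∀ i < w, f.coeff i ∈ IsLocalRing.maximalIdeal A

/-- Over an artinian local ring, a Laurent series with a winding number is invertible, being the sum
of a nilpotent series and a series whose leading coefficient is a unit. -/
theorem WindingNumberIs.isUnit {A : Type} [CommRing A] [IsArtinianRing A] [IsLocalRing A]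
    {φ : LaurentSeries A} {w : ℤ} (h : WindingNumberIs A φ w) : IsUnit φ := by
  obtain ⟨hu, hm⟩ := h
  set n : LaurentSeries A := ∑ i ∈ Finset.Ico φ.order w, HahnSeries.single i (φ.coeff i) with hn
  have hcoeff (j : ℤ) : n.coeff j = if j ∈ Finset.Ico φ.order w then φ.coeff j else 0 := by
    simp only [hn, HahnSeries.coeff_sum, HahnSeries.coeff_single]
    convert Finset.sum_ite_eq (Finset.Ico φ.order w) j fun i => φ.coeff i
  have hnil : IsNilpotent n := by
    refine isNilpotent_sum fun i hi => ?_
    obtain ⟨k, hk⟩ := Ring.KrullDimLE.isNilpotent_iff_mem_maximalIdeal.mpr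
      (hm i (Finset.mem_Ico.mp hi).2)
    exact ⟨k, by rw [HahnSeries.single_pow, hk, HahnSeries.single_eq_zero]⟩
  have hw : (φ - n).coeff w = φ.coeff w := by simp [hcoeff]
  have hlow (j : ℤ) (hj : j < w) : (φ - n).coeff j = 0 := by
    rw [HahnSeries.coeff_sub, hcoeff]
    split_ifs with hmem
    · exact sub_self _
    · rw [HahnSeries.coeff_eq_zero_of_lt_order (by simp at hmem; lia), sub_zero]
  have hne : (φ - n).coeff w ≠ 0 := hw ▸ hu.ne_zero
  have hord : (φ - n).order = w := le_antisymm (HahnSeries.order_le_of_coeff_ne_zero hne)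
    ((HahnSeries.le_order_iff_forall (HahnSeries.ne_zero_of_coeff_ne_zero hne)).mpr hlow)
  have hunit : IsUnit (φ - n) := by
    refine HahnSeries.isUnit_of_isUnit_leadingCoeff_AddUnitOrder ?_ (AddGroup.isAddUnit _)
    rwa [HahnSeries.leadingCoeff_eq, hord, hw]
  simpa using hnil.isUnit_add_left_of_commute hunit (Commute.all _ _)

/-- Let `A` be an artinian local ring and `f ∈ A((t))^×` with `1 - f ∈ A((t))^×`.
If `w(f) = w(1-f) = 0` and some coefficient `a_i` of `f` with `i > 0` is a unit of `A`,
then there exist `λ ∈ A^×` and `φ ∈ A((t))^×` with `w(φ) > 0` such that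
`1 - f = (1 - λ)(1 - φ)`. -/
theorem sub_one_factorization (A : Type) [CommRing A] [IsArtinianRing A] [IsLocalRing A]
    (f : LaurentSeries A) (hf : IsUnit f) (h1f : IsUnit (1 - f))
    (hw : WindingNumberIs A f 0) (hw' : WindingNumberIs A (1 - f) 0)
    (hi : ∃ i : ℤ, 0 < i ∧ IsUnit (f.coeff i)) :
    ∃ (lam : Aˣ) (phi : LaurentSeries A), IsUnit phi ∧
      (∃ w : ℤ, 0 < w ∧ WindingNumberIs A phi w) ∧
      1 - f = (1 - HahnSeries.C (lam : A)) * (1 - phi) := by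
  obtain ⟨lam, hlam⟩ := hw.1
  obtain ⟨u, hu⟩ : IsUnit (1 - f.coeff 0) := by simpa using hw'.1
  have huC : (1 - HahnSeries.C (f.coeff 0) : LaurentSeries A) = HahnSeries.C (u : A) := by
    rw [hu, map_sub, map_one]
  have hinv : (HahnSeries.C (u : A) * HahnSeries.C ((u⁻¹ : Aˣ) : A) : LaurentSeries A) = 1 := by
    rw [← map_mul, Units.mul_inv, map_one]
  set phi : LaurentSeries A :=
    HahnSeries.C ((u⁻¹ : Aˣ) : A) * (f - HahnSeries.C (f.coeff 0)) with hphi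
  have hc (j : ℤ) (hj : j ≠ 0) : phi.coeff j = ((u⁻¹ : Aˣ) : A) * f.coeff j := by
    rw [hphi, HahnSeries.C_apply, HahnSeries.coeff_single_zero_mul, HahnSeries.coeff_sub,
      HahnSeries.C_apply, HahnSeries.coeff_single_of_ne hj, sub_zero]
  have hc0 : phi.coeff 0 = 0 := by
    rw [hphi, HahnSeries.C_apply, HahnSeries.coeff_single_zero_mul, HahnSeries.coeff_sub,
      HahnSeries.C_apply, HahnSeries.coeff_single_same, sub_self, mul_zero]
  obtain ⟨w, ⟨hwpos, hwu⟩, hmin⟩ := Int.exists_least_of_bdd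
    (P := fun i : ℤ => 0 < i ∧ IsUnit (f.coeff i)) ⟨0, fun z hz => hz.1.le⟩ hi
  have hwind : WindingNumberIs A phi w := by
    refine ⟨?_, fun j hj => ?_⟩
    · rw [hc w hwpos.ne']
      exact u⁻¹.isUnit.mul hwu
    · rcases lt_trichotomy j 0 with hneg | rfl | hpos
      · rw [hc j hneg.ne]
        exact Ideal.mul_mem_left _ _ (hw.2 j hneg)
      · rw [hc0]
        exact zero_mem _
      · rw [hc j hpos.ne']
        refine Ideal.mul_mem_left _ _ ((IsLocalRing.mem_maximalIdeal _).mpr fun hunit => ?_)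
        exact (hmin j ⟨hpos, hunit⟩).not_gt hj
  refine ⟨lam, phi, hwind.isUnit, ⟨w, hwpos, hwind⟩, ?_⟩
  rw [hlam, huC, mul_sub, mul_one, hphi, ← mul_assoc, hinv, one_mul, ← huC]
  ring
end
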